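/- arXiv:2302.01077 — 4 statements merged into one kernel-verified Lean document; each statement's English description precedes it below -/
import Mathlib

section
/- Let f be a bijective transformation of G_∞(H) which preserves the ortho-adjacency relation in both directions. Let X, Y ∈ G_∞(H) be adjacent, let f map the tops G^1(X) and G^1(Y) onto tops G^1(X') and G^1(Y') respectively, let U_X : X → X' and U_Y : Y → Y' be surjective linear or conjugate-linear isometries with f(M) = U_X(M) for all M ∈ G^1(X) and f(N) = U_Y(N) for all N ∈ G^1(Y), and suppose that for every one-dimensional subspace P of X ∩ Y the star S(P^⊥ ∩ X ∩ Y) is mapped by f onto a star. Then U_X(P) = U_Y(P) for every one-dimensional subspace P of X ∩ Y. -/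
open Module Submodule Classical

variable {H : Type*} [NormedAddCommGroup H] [InnerProductSpace ℂ H] [CompleteSpace H]

/-- The orthogonal projection of `H` onto a closed subspace `K`, as a map `H →L[ℂ] H`
(defined to be `0` if `K` is not closed). -/
noncomputable def projCLM (K : Submodule ℂ H) : H →L[ℂ] H :=
  if h : IsClosed (K : Set H) then
    haveI : CompleteSpace K := h.completeSpace_coe
    K.subtypeL.comp (orthogonalProjection K)
  else 0

/-- Two (closed) subspaces are compatible if their orthogonal projections commute. -/
def Compatible (K L : Submodule ℂ H) : Prop := Commute (projCLM K) (projCLM L)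

/-- `W` is a subspace of `X` of finite codimension `n` in `X`. -/
def CodimIn (W X : Submodule ℂ H) (n : ℕ) : Prop :=
  W ≤ X ∧ FiniteDimensional ℂ (↥X ⧸ W.comap X.subtype) ∧
    finrank ℂ (↥X ⧸ W.comap X.subtype) = n

/-- `X` and `Y` are adjacent: `X ∩ Y` is a hyperplane in both `X` and `Y`. -/
def Adjacent (X Y : Submodule ℂ H) : Prop :=
  CodimIn (X ⊓ Y) X 1 ∧ CodimIn (X ⊓ Y) Y 1

/-- `X` and `Y` are ortho-adjacent: adjacent and compatible. -/
def OrthoAdjacent (X Y : Submodule ℂ H) : Prop := Adjacent X Y ∧ Compatible X Y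

/-- The Grassmannian `G_∞(H)` of closed subspaces of `H` whose dimension and
codimension both are infinite. -/
def Ginf : Set (Submodule ℂ H) :=
  {X | IsClosed (X : Set H) ∧ ¬FiniteDimensional ℂ X ∧ ¬FiniteDimensional ℂ Xᗮ}

/-- `X ∩ Y` has the same finite codimension in both `X` and `Y`. -/
def SameFinCodim (X Y : Submodule ℂ H) : Prop :=
  ∃ n : ℕ, CodimIn (X ⊓ Y) X n ∧ CodimIn (X ⊓ Y) Y n

/-- An `A`-component of `G_∞(H)`: a set of elements pairwise at the same finite
codimension, maximal with respect to this property. -/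
def IsAComponent (C : Set (Submodule ℂ H)) : Prop :=
  C ⊆ Ginf ∧ (∀ X ∈ C, ∀ Y ∈ C, SameFinCodim X Y) ∧
    ∀ D : Set (Submodule ℂ H), D ⊆ Ginf → (∀ X ∈ D, ∀ Y ∈ D, SameFinCodim X Y) →
      C ⊆ D → D = C

/-- The star `S(X)`: all closed subspaces of `H` containing `X` as a hyperplane. -/
def starSet (X : Submodule ℂ H) : Set (Submodule ℂ H) :=
  {Y | IsClosed (Y : Set H) ∧ CodimIn X Y 1}

/-- The top `G¹(X)`: all closed hyperplanes of `X`. -/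
def topSet (X : Submodule ℂ H) : Set (Submodule ℂ H) :=
  {M | IsClosed (M : Set H) ∧ CodimIn M X 1}

/-- The image `U(M)` of a subspace `M ⊆ X` under a linear isometry `U : X ≃ X'`,
viewed as a subspace of `H`. -/
def imL (X X' : Submodule ℂ H) (U : ↥X ≃ₗᵢ[ℂ] ↥X') (M : Submodule ℂ H) : Submodule ℂ H :=
  Submodule.map X'.subtype (Submodule.map U.toLinearEquiv.toLinearMap (M.comap X.subtype))

/-- The image `U(M)` of a subspace `M ⊆ X` under a conjugate-linear isometry `U : X ≃ X'`,
viewed as a subspace of `H`. -/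
def imC (X X' : Submodule ℂ H) (U : ↥X ≃ₗᵢ⋆[ℂ] ↥X') (M : Submodule ℂ H) : Submodule ℂ H :=
  Submodule.map X'.subtype (Submodule.map U.toLinearEquiv.toLinearMap (M.comap X.subtype))

/-- The Grassmannian `G_k(H)` of `k`-dimensional subspaces of `H`. -/
def Gk (k : ℕ) : Set (Submodule ℂ H) :=
  {X | FiniteDimensional ℂ X ∧ finrank ℂ X = k}

/-- The Grassmannian `G^k(H)` of closed subspaces of `H` of codimension `k`. -/
def GCk (k : ℕ) : Set (Submodule ℂ H) :=
  {X | IsClosed (X : Set H) ∧ FiniteDimensional ℂ (H ⧸ X) ∧ finrank ℂ (H ⧸ X) = k}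

/-!
Let `P ⊆ X ∩ Y` be a line, `Z = X ∩ Y`, and let `S(W)` contain the image under `f` of the star of
`P^⊥ ∩ Z`. Both `Z` and `P^⊥ ∩ X` are hyperplanes of `X` and lie in this star, so
`W ⊆ U_X(Z) ∩ U_X(P^⊥ ∩ X) = U_X(P^⊥ ∩ Z) ⊊ U_X(Z)`; as `W` is a hyperplane of `f(Z) = U_X(Z)`, it
equals `U_X(P^⊥ ∩ Z)`. Since `U_X` preserves orthogonality, `U_X(P)` is the orthogonal complement
of `W` in `f(Z)`, which does not depend on `X`, so that `U_Y(P)` is the same line.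
-/

section Orthogonality

variable {𝕜 E : Type*} [RCLike 𝕜] [NormedAddCommGroup E] [InnerProductSpace 𝕜 E]

/-- Only norms and the set of all scalars enter this criterion, so it is respected by
conjugate-linear isometries as well as by linear ones. -/
theorem inner_eq_zero_iff_forall_norm_add_smul_eq {x y : E} :
    inner 𝕜 x y = 0 ↔ ∀ c : 𝕜, ‖x + c • y‖ = ‖x - c • y‖ := by
  have norm_eq_iff (c : 𝕜) : ‖x + c • y‖ = ‖x - c • y‖ ↔ RCLike.re (c * inner 𝕜 x y) = 0 := by
    rw [← sq_eq_sq₀ (norm_nonneg _) (norm_nonneg _), norm_add_sq (𝕜 := 𝕜), norm_sub_sq (𝕜 := 𝕜),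
      inner_smul_right]
    constructor <;> intro h <;> linarith
  simp only [norm_eq_iff]
  refine ⟨fun h c ↦ by simp [h], fun h ↦ ?_⟩
  have hre := h (starRingEnd 𝕜 (inner 𝕜 x y))
  rwa [RCLike.conj_mul, ← RCLike.ofReal_pow, RCLike.ofReal_re, sq_eq_zero_iff, norm_eq_zero] at hre

theorem inner_semilinearIsometry_map_eq_zero_iff {F : Type*} [NormedAddCommGroup F]
    [InnerProductSpace 𝕜 F] {σ : 𝕜 →+* 𝕜} [RingHomSurjective σ] (U : E →ₛₗᵢ[σ] F) {x y : E} :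
    inner 𝕜 (U x) (U y) = 0 ↔ inner 𝕜 x y = 0 := by
  rw [inner_eq_zero_iff_forall_norm_add_smul_eq, inner_eq_zero_iff_forall_norm_add_smul_eq,
    (RingHom.surjective σ).forall]
  simp only [← U.map_smulₛₗ, ← map_add, ← map_sub, U.norm_map]

variable {P Z X : Submodule 𝕜 E}

theorem sup_inf_orthogonal_eq_left {K L : Submodule 𝕜 E} (h : K ⟂ L) : (K ⊔ L) ⊓ Lᗮ = K := by
  rw [sup_inf_assoc_of_le L h.le, L.inf_orthogonal_eq_bot, sup_bot_eq]

theorem inf_orthogonal_orthogonal_inf [P.HasOrthogonalProjection] (hPZ : P ≤ Z) :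
    Z ⊓ (Pᗮ ⊓ Z)ᗮ = P := by
  have hortho : P ⟂ Pᗮ ⊓ Z := (isOrtho_orthogonal_right P).mono_right inf_le_left
  simpa only [sup_orthogonal_inf_of_hasOrthogonalProjection hPZ]
    using sup_inf_orthogonal_eq_left hortho

theorem orthogonal_inf_covBy (hP : finrank 𝕜 P = 1) (hPZ : P ≤ Z) : Pᗮ ⊓ Z ⋖ Z := by
  have : FiniteDimensional 𝕜 P := finite_of_finrank_eq_succ hP
  have hbot : P ⊓ (Pᗮ ⊓ Z) = ⊥ := by rw [← inf_assoc, P.inf_orthogonal_eq_bot, bot_inf_eq]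
  have hcov : P ⊓ (Pᗮ ⊓ Z) ⋖ P := hbot ▸ (isAtom_iff_finrank_eq_one.2 hP).bot_covBy
  simpa only [sup_orthogonal_inf_of_hasOrthogonalProjection hPZ]
    using covBy_sup_of_inf_covBy_left hcov

theorem orthogonal_inf_covBy_orthogonal_inf [P.HasOrthogonalProjection] (hPZ : P ≤ Z)
    (hZX : Z ⋖ X) : Pᗮ ⊓ Z ⋖ Pᗮ ⊓ X := by
  have hsup : Pᗮ ⊓ X ⊔ Z = X := by
    refine le_antisymm (sup_le inf_le_right hZX.le) ?_
    calc X = P ⊔ Pᗮ ⊓ X :=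
          (sup_orthogonal_inf_of_hasOrthogonalProjection (hPZ.trans hZX.le)).symm
      _ ≤ Pᗮ ⊓ X ⊔ Z := sup_le (hPZ.trans le_sup_right) le_sup_left
  have hinf : Pᗮ ⊓ X ⊓ Z = Pᗮ ⊓ Z := by rw [inf_assoc, inf_eq_right.2 hZX.le]
  exact hinf ▸ inf_covBy_of_covBy_sup_right (hsup.symm ▸ hZX)

end Orthogonality

section IsometryImage

variable {𝕜 E F : Type*} [RCLike 𝕜] [NormedAddCommGroup E] [InnerProductSpace 𝕜 E]
  [NormedAddCommGroup F] [InnerProductSpace 𝕜 F]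
  {σ σ' : 𝕜 →+* 𝕜} [RingHomInvPair σ σ'] [RingHomInvPair σ' σ]
  {X : Submodule 𝕜 E} {X' : Submodule 𝕜 F}

/-- The image `U(M ∩ X)` of a subspace `M` under a semilinear isometry `U` of `X` onto `X'`, as a
subspace of the ambient space of `X'`. It unfolds to `imL` when `σ` is the identity and to `imC`
when `σ` is complex conjugation. -/
def isometryImage (U : X ≃ₛₗᵢ[σ] X') (M : Submodule 𝕜 E) : Submodule 𝕜 F :=
  ((M.comap X.subtype).map U.toLinearEquiv.toLinearMap).map X'.subtype

variable (U : X ≃ₛₗᵢ[σ] X') {M N P Z : Submodule 𝕜 E}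

theorem mem_isometryImage {y : F} :
    y ∈ isometryImage U M ↔ ∃ x : X, (x : E) ∈ M ∧ (U x : F) = y := by
  simp only [isometryImage, mem_map, exists_exists_and_eq_and]
  rfl

theorem apply_mem_isometryImage {x : X} : (U x : F) ∈ isometryImage U M ↔ (x : E) ∈ M := by
  simp [isometryImage]

theorem isometryImage_le_isometryImage_iff (hM : M ≤ X) :
    isometryImage U M ≤ isometryImage U N ↔ M ≤ N := by
  constructor
  · intro h x hx
    exact (apply_mem_isometryImage U (x := ⟨x, hM hx⟩)).1 (h ((apply_mem_isometryImage U).2 hx))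
  · intro h y hy
    obtain ⟨x, hx, rfl⟩ := (mem_isometryImage U).1 hy
    exact (apply_mem_isometryImage U).2 (h hx)

theorem isometryImage_inf : isometryImage U (M ⊓ N) = isometryImage U M ⊓ isometryImage U N := by
  simp only [isometryImage, comap_inf, map_inf _ U.injective, map_inf _ X'.injective_subtype]

theorem apply_mem_isometryImage_orthogonal_iff (hN : N ≤ X) {x : X} :
    (U x : F) ∈ (isometryImage U N)ᗮ ↔ (x : E) ∈ Nᗮ := by
  have inner_apply (z : X) : inner 𝕜 (U z : F) (U x : F) = 0 ↔ inner 𝕜 (z : E) (x : E) = 0 :=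
    inner_semilinearIsometry_map_eq_zero_iff U.toLinearIsometry
  simp only [mem_orthogonal]
  constructor
  · intro h z hz
    exact (inner_apply ⟨z, hN hz⟩).1 (h _ ((apply_mem_isometryImage U).2 hz))
  · intro h y hy
    obtain ⟨z, hz, rfl⟩ := (mem_isometryImage U).1 hy
    exact (inner_apply z).2 (h z hz)

theorem isometryImage_inf_orthogonal (hN : N ≤ X) :
    isometryImage U (M ⊓ Nᗮ) = isometryImage U M ⊓ (isometryImage U N)ᗮ := by
  ext y
  simp only [mem_inf, mem_isometryImage]
  constructor
  · rintro ⟨x, ⟨hxM, hxN⟩, rfl⟩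
    exact ⟨⟨x, hxM, rfl⟩, (apply_mem_isometryImage_orthogonal_iff U hN).2 hxN⟩
  · rintro ⟨⟨x, hxM, rfl⟩, hxN⟩
    exact ⟨x, ⟨hxM, (apply_mem_isometryImage_orthogonal_iff U hN).1 hxN⟩, rfl⟩

theorem eq_isometryImage_orthogonal_inf {W : Submodule 𝕜 F} (hP : finrank 𝕜 P = 1) (hPZ : P ≤ Z)
    (hZX : Z ≤ X) (hWZ : W ⋖ isometryImage U Z) (hWP : W ≤ isometryImage U (Pᗮ ⊓ X)) :
    W = isometryImage U (Pᗮ ⊓ Z) := by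
  have hlt : Pᗮ ⊓ Z < Z := (orthogonal_inf_covBy hP hPZ).lt
  have hle : W ≤ isometryImage U (Pᗮ ⊓ Z) := by
    rw [← inf_eq_right.2 hZX, ← inf_assoc, isometryImage_inf]
    exact le_inf hWP hWZ.le
  refine ((hWZ.eq_or_eq hle ?_).resolve_right fun heq ↦ hlt.not_ge ?_).symm
  · exact (isometryImage_le_isometryImage_iff U (hlt.le.trans hZX)).2 hlt.le
  · exact (isometryImage_le_isometryImage_iff U hZX).1 heq.ge

theorem isometryImage_eq_inf_orthogonal {W : Submodule 𝕜 F} (hP : finrank 𝕜 P = 1) (hPZ : P ≤ Z)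
    (hZX : Z ≤ X) (hWZ : W ⋖ isometryImage U Z) (hWP : W ≤ isometryImage U (Pᗮ ⊓ X)) :
    isometryImage U P = isometryImage U Z ⊓ Wᗮ := by
  have : FiniteDimensional 𝕜 P := finite_of_finrank_eq_succ hP
  rw [eq_isometryImage_orthogonal_inf U hP hPZ hZX hWZ hWP,
    ← isometryImage_inf_orthogonal U (inf_le_right.trans hZX), inf_orthogonal_orthogonal_inf hPZ]

end IsometryImage

section StarsAndTops

variable {E F : Type*} [NormedAddCommGroup E] [InnerProductSpace ℂ E]
  [NormedAddCommGroup F] [InnerProductSpace ℂ F]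

theorem codimIn_one_iff_covBy {W X : Submodule ℂ E} : CodimIn W X 1 ↔ W ⋖ X := by
  have covBy_iff (h : W ≤ X) : W ⋖ X ↔ finrank ℂ (X ⧸ W.comap X.subtype) = 1 :=
    (covBy_iff_quot_is_simple h).trans isSimpleModule_iff_finrank_eq_one
  constructor
  · rintro ⟨hle, -, hrank⟩
    exact (covBy_iff hle).2 hrank
  · intro h
    have hrank := (covBy_iff h.le).1 h
    exact ⟨h.le, finite_of_finrank_eq_succ hrank, hrank⟩

theorem isometryImage_eq_apply_inf_orthogonal {σ σ' : ℂ →+* ℂ} [RingHomInvPair σ σ']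
    [RingHomInvPair σ' σ] {f : Submodule ℂ E → Submodule ℂ F} {X Z P : Submodule ℂ E}
    {X' W : Submodule ℂ F} (hX : IsClosed (X : Set E)) (hZ : Z ∈ topSet X)
    (U : X ≃ₛₗᵢ[σ] X') (hU : ∀ M ∈ topSet X, f M = isometryImage U M)
    (hP : finrank ℂ P = 1) (hPZ : P ≤ Z)
    (hstar : Set.MapsTo f (starSet (Pᗮ ⊓ Z)) (starSet W)) :
    isometryImage U P = f Z ⊓ Wᗮ := by
  have : FiniteDimensional ℂ P := finite_of_finrank_eq_succ hP
  have hZX : Z ⋖ X := codimIn_one_iff_covBy.1 hZ.2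
  have hclosed : IsClosed ((Pᗮ ⊓ X : Submodule ℂ E) : Set E) := P.isClosed_orthogonal.inter hX
  have hPX_top : Pᗮ ⊓ X ∈ topSet X :=
    ⟨hclosed, codimIn_one_iff_covBy.2 (orthogonal_inf_covBy hP (hPZ.trans hZX.le))⟩
  have hPX_star : Pᗮ ⊓ X ∈ starSet (Pᗮ ⊓ Z) :=
    ⟨hclosed, codimIn_one_iff_covBy.2 (orthogonal_inf_covBy_orthogonal_inf hPZ hZX)⟩
  have hZ_star : Z ∈ starSet (Pᗮ ⊓ Z) :=
    ⟨hZ.1, codimIn_one_iff_covBy.2 (orthogonal_inf_covBy hP hPZ)⟩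
  have hWZ : W ⋖ isometryImage U Z := hU Z hZ ▸ codimIn_one_iff_covBy.1 (hstar hZ_star).2
  have hWP : W ≤ isometryImage U (Pᗮ ⊓ X) := hU _ hPX_top ▸ (hstar hPX_star).2.1
  rw [isometryImage_eq_inf_orthogonal U hP hPZ hZX.le hWZ hWP, hU Z hZ]

theorem stmt13_general {σ σ' τ τ' : ℂ →+* ℂ} [RingHomInvPair σ σ'] [RingHomInvPair σ' σ]
    [RingHomInvPair τ τ'] [RingHomInvPair τ' τ] {f : Submodule ℂ E → Submodule ℂ F}
    {X Y P : Submodule ℂ E} {X' Y' W : Submodule ℂ F}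
    (hX : IsClosed (X : Set E)) (hY : IsClosed (Y : Set E)) (hadj : Adjacent X Y)
    (UX : X ≃ₛₗᵢ[σ] X') (UY : Y ≃ₛₗᵢ[τ] Y')
    (hUX : ∀ M ∈ topSet X, f M = isometryImage UX M)
    (hUY : ∀ N ∈ topSet Y, f N = isometryImage UY N)
    (hP : finrank ℂ P = 1) (hPXY : P ≤ X ⊓ Y)
    (hstar : Set.MapsTo f (starSet (Pᗮ ⊓ (X ⊓ Y))) (starSet W)) :
    isometryImage UX P = isometryImage UY P := by
  have hXY : IsClosed ((X ⊓ Y : Submodule ℂ E) : Set E) := hX.inter hY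
  rw [isometryImage_eq_apply_inf_orthogonal hX ⟨hXY, hadj.1⟩ UX hUX hP hPXY hstar,
    isometryImage_eq_apply_inf_orthogonal hY ⟨hXY, hadj.2⟩ UY hUY hP hPXY hstar]

end StarsAndTops

/-- with `f` preserving ortho-adjacency in both directions, `X, Y ∈ G_∞(H)`
adjacent, `f` mapping `G¹(X)`, `G¹(Y)` onto `G¹(X')`, `G¹(Y')`, `U_X`, `U_Y` unitary or
anti-unitary operators inducing `f` on these tops, and every star `S(P^⊥ ∩ X ∩ Y)` mapped by
`f` onto a star, we have `U_X(P) = U_Y(P)` for every one-dimensional subspace `P ⊆ X ∩ Y`. -/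
theorem stmt13 (hH : ¬FiniteDimensional ℂ H)
    (f : Submodule ℂ H → Submodule ℂ H)
    (hbij : Set.BijOn f (Ginf (H := H)) (Ginf (H := H)))
    (hf : ∀ X ∈ Ginf (H := H), ∀ Y ∈ Ginf (H := H),
      OrthoAdjacent X Y ↔ OrthoAdjacent (f X) (f Y))
    (X Y X' Y' : Submodule ℂ H)
    (hX : X ∈ Ginf (H := H)) (hY : Y ∈ Ginf (H := H))
    (hX' : X' ∈ Ginf (H := H)) (hY' : Y' ∈ Ginf (H := H))
    (hadj : Adjacent X Y)
    (htopX : f '' topSet X = topSet X') (htopY : f '' topSet Y = topSet Y')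
    (hstar : ∀ P : Submodule ℂ H, finrank ℂ P = 1 → P ≤ X ⊓ Y →
      ∃ W ∈ Ginf (H := H), f '' starSet (Pᗮ ⊓ (X ⊓ Y)) = starSet W) :
    (∀ (UX : ↥X ≃ₗᵢ[ℂ] ↥X') (UY : ↥Y ≃ₗᵢ[ℂ] ↥Y'),
      (∀ M ∈ topSet X, f M = imL X X' UX M) → (∀ N ∈ topSet Y, f N = imL Y Y' UY N) →
      ∀ P : Submodule ℂ H, finrank ℂ P = 1 → P ≤ X ⊓ Y →
        imL X X' UX P = imL Y Y' UY P) ∧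
    (∀ (UX : ↥X ≃ₗᵢ[ℂ] ↥X') (UY : ↥Y ≃ₗᵢ⋆[ℂ] ↥Y'),
      (∀ M ∈ topSet X, f M = imL X X' UX M) → (∀ N ∈ topSet Y, f N = imC Y Y' UY N) →
      ∀ P : Submodule ℂ H, finrank ℂ P = 1 → P ≤ X ⊓ Y →
        imL X X' UX P = imC Y Y' UY P) ∧
    (∀ (UX : ↥X ≃ₗᵢ⋆[ℂ] ↥X') (UY : ↥Y ≃ₗᵢ[ℂ] ↥Y'),
      (∀ M ∈ topSet X, f M = imC X X' UX M) → (∀ N ∈ topSet Y, f N = imL Y Y' UY N) →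
      ∀ P : Submodule ℂ H, finrank ℂ P = 1 → P ≤ X ⊓ Y →
        imC X X' UX P = imL Y Y' UY P) ∧
    (∀ (UX : ↥X ≃ₗᵢ⋆[ℂ] ↥X') (UY : ↥Y ≃ₗᵢ⋆[ℂ] ↥Y'),
      (∀ M ∈ topSet X, f M = imC X X' UX M) → (∀ N ∈ topSet Y, f N = imC Y Y' UY N) →
      ∀ P : Submodule ℂ H, finrank ℂ P = 1 → P ≤ X ⊓ Y →
        imC X X' UX P = imC Y Y' UY P) := by
  refine ⟨?_, ?_, ?_, ?_⟩ <;> intro UX UY hUX hUY P hP hPXY <;>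
    obtain ⟨W, -, hW⟩ := hstar P hP hPXY <;>
    exact stmt13_general hX.1 hY.1 hadj UX UY hUX hUY hP hPXY (Set.mapsTo_iff_image_subset.2 hW.le)
end

section
/- Let U be a unitary operator on H and let C be an A-component of G_∞(H) such that U(X) ∈ C for every X ∈ C and U maps C onto C. Define f : G_∞(H) → G_∞(H) by f(X) = U(X) if X ∈ C and f(X) = X if X ∉ C. Then f is a bijective transformation of G_∞(H) which preserves the ortho-adjacency relation in both directions. -/
open Module Submodule Classical

variable {H : Type*} [NormedAddCommGroup H] [InnerProductSpace ℂ H] [CompleteSpace H]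

/-!
Ortho-adjacent subspaces satisfy `SameFinCodim`, and `SameFinCodim` is an equivalence relation, so a
maximal class `C` is closed under it in `G_∞(H)`. No ortho-adjacent pair therefore has exactly one
member in `C`, nor does such a pair arise after applying `U` inside `C`; so `f` need only be checked
on pairs inside `C`, where it is a unitary map, and on pairs outside `C`, where it is the identity.

For transitivity of `SameFinCodim`, let `c(W, X)` be the codimension of `W ∩ X` in `X`. If `W` has
finite codimension in `X ∩ Y`, then `c(Y, X) = c(X, Y)` if and only if `c(W, X) = c(W, Y)`, and
`W = X ∩ Y ∩ Z` is a common subspace of this kind for all three pairs among `X`, `Y`, `Z`.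
-/

section RelLength

variable {R M M' : Type*} [Ring R] [AddCommGroup M] [Module R M] [AddCommGroup M'] [Module R M']
  {N P Q S : Submodule R M}

/-- The relative length of `N` in `P`, i.e. the length of `P ⧸ (N ⊓ P)`. Over a division ring this
is the codimension of `N ⊓ P` in `P`, with the value `⊤` when it is infinite. -/
noncomputable def relLength (N P : Submodule R M) : ℕ∞ :=
  Module.length R (P ⧸ N.submoduleOf P)

theorem relLength_self (N : Submodule R M) : relLength N N = 0 := by
  rw [relLength, Module.length_eq_zero_iff, Submodule.Quotient.subsingleton_iff, submoduleOf_self]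

theorem relLength_inf_left (N P : Submodule R M) : relLength (P ⊓ N) P = relLength N P := by
  rw [relLength, submoduleOf, comap_inf, comap_subtype_self, top_inf_eq, relLength, submoduleOf]

theorem comap_inclusion_submoduleOf (N : Submodule R M) (h : P ≤ Q) :
    (N.submoduleOf Q).comap (inclusion h) = N.submoduleOf P :=
  rfl

theorem mapQ_inclusion_injective (N : Submodule R M) (h : P ≤ Q) :
    Function.Injective (mapQ (N.submoduleOf P) (N.submoduleOf Q) (inclusion h)
      (comap_inclusion_submoduleOf N h).ge) := by
  rw [← LinearMap.ker_eq_bot, ker_mapQ, comap_inclusion_submoduleOf, mkQ_map_self]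

theorem relLength_mono_right (N : Submodule R M) (h : P ≤ Q) : relLength N P ≤ relLength N Q :=
  Module.length_le_of_injective _ (mapQ_inclusion_injective N h)

theorem relLength_add_relLength (hNP : N ≤ P) (hPQ : P ≤ Q) :
    relLength N P + relLength P Q = relLength N Q := by
  have hle : N.submoduleOf Q ≤ P.submoduleOf Q := comap_mono hNP
  refine (Module.length_eq_add_of_exact _ (factor hle) (mapQ_inclusion_injective N hPQ)
    (factor_surjective hle) ?_).symm
  rw [LinearMap.exact_iff, ker_mapQ, range_mapQ, range_inclusion, comap_id, submoduleOf.eq_def P]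

theorem relLength_anti_left (hNP : N ≤ P) (Q : Submodule R M) : relLength P Q ≤ relLength N Q := by
  rw [← relLength_inf_left, ← relLength_inf_left N,
    ← relLength_add_relLength (inf_le_inf_left Q hNP) inf_le_left]
  exact le_add_self

theorem relLength_inf_add_relLength (hNP : N ≤ P) (hNQ : N ≤ Q) :
    relLength N (P ⊓ Q) + relLength P Q = relLength N Q := by
  rw [← relLength_inf_left P Q, inf_comm Q,
    relLength_add_relLength (le_inf hNP hNQ) inf_le_right]

theorem relLength_triangle (N P Q : Submodule R M) :
    relLength N Q ≤ relLength N P + relLength P Q := calc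
  relLength N Q ≤ relLength (P ⊓ Q ⊓ N) Q := relLength_anti_left inf_le_right Q
  _ = relLength N (P ⊓ Q) + relLength P Q := by
    rw [← relLength_inf_add_relLength (inf_le_left.trans inf_le_left)
      (inf_le_left.trans inf_le_right), relLength_inf_left]
  _ ≤ relLength N P + relLength P Q := by gcongr; exact relLength_mono_right N inf_le_left

theorem relLength_eq_relLength_iff_comm (hNP : N ≤ P) (hNQ : N ≤ Q)
    (hfin : relLength N (P ⊓ Q) ≠ ⊤) :
    relLength N P = relLength N Q ↔ relLength Q P = relLength P Q := by
  rw [← relLength_inf_add_relLength hNQ hNP, ← relLength_inf_add_relLength hNP hNQ, inf_comm Q]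
  exact WithTop.add_left_inj hfin

theorem relLength_comm_trans (hPQ : relLength Q P = relLength P Q) (hPQ_fin : relLength P Q ≠ ⊤)
    (hQS : relLength S Q = relLength Q S) (hQS_fin : relLength Q S ≠ ⊤) :
    relLength S P = relLength P S := by
  let N := P ⊓ Q ⊓ S
  have hNP : N ≤ P := inf_le_left.trans inf_le_left
  have hNQ : N ≤ Q := inf_le_left.trans inf_le_right
  have hNS : N ≤ S := inf_le_right
  have fin_inf {A B C : Submodule R M} (hN : N = A ⊓ B ⊓ C) (hBC : relLength C B ≠ ⊤) :
      relLength N (A ⊓ B) ≠ ⊤ := by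
    rw [hN, relLength_inf_left]
    exact ne_top_of_le_ne_top hBC (relLength_mono_right C inf_le_right)
  have hN_PQ : relLength N P = relLength N Q :=
    (relLength_eq_relLength_iff_comm hNP hNQ (fin_inf rfl (hQS ▸ hQS_fin))).2 hPQ
  have hN_QS : relLength N Q = relLength N S :=
    (relLength_eq_relLength_iff_comm hNQ hNS (inf_comm S Q ▸
      fin_inf (by simp only [N]; ac_rfl) hPQ_fin)).2 hQS
  exact (relLength_eq_relLength_iff_comm hNP hNS (inf_comm S P ▸
    fin_inf (by simp only [N]; ac_rfl) (hPQ ▸ hPQ_fin))).1 (hN_PQ.trans hN_QS)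

theorem relLength_map {f : M →ₗ[R] M'} (hf : Function.Injective f) (N P : Submodule R M) :
    relLength (N.map f) (P.map f) = relLength N P := by
  have hmap : (N.submoduleOf P).map (P.equivMapOfInjective f hf : P →ₗ[R] P.map f) =
      (N.map f).submoduleOf (P.map f) := by
    apply map_injective_of_injective (P.map f).injective_subtype
    rw [submoduleOf, submoduleOf, map_comap_subtype, ← Submodule.map_inf _ hf, ← map_comap_subtype,
      ← map_comp, ← map_comp]
    rfl
  exact (Quotient.equiv _ _ (P.equivMapOfInjective f hf) hmap).length_eq.symm

end RelLength

section Piecewise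

variable {α : Type*} {s t : Set α} {f : α → α} [∀ x, Decidable (x ∈ s)]

theorem bijOn_piecewise_id (hf : Set.BijOn f s s) (hst : s ⊆ t) :
    Set.BijOn (s.piecewise f id) t t := by
  have hs : Set.BijOn (s.piecewise f id) s s := hf.congr (s.piecewise_eqOn f id).symm
  have hdiff : Set.BijOn (s.piecewise f id) (t \ s) (t \ s) :=
    (Set.bijOn_id _).congr fun _ hx => (s.piecewise_eqOn_compl f id hx.2).symm
  have hinj : Set.InjOn (s.piecewise f id) (s ∪ t \ s) :=
    (Set.injOn_union Set.disjoint_sdiff_right).2 ⟨hs.injOn, hdiff.injOn, fun _ hx _ hy =>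
      Set.disjoint_sdiff_right.ne_of_mem (hs.mapsTo hx) (hdiff.mapsTo hy)⟩
  simpa only [Set.union_sdiff_cancel hst] using hs.union hdiff hinj

theorem piecewise_id_rel_iff {r : α → α → Prop} (hf : Set.MapsTo f s s) (hst : s ⊆ t)
    (hr : ∀ x ∈ t, ∀ y ∈ t, r x y → (x ∈ s ↔ y ∈ s))
    (hfr : ∀ x ∈ s, ∀ y ∈ s, r (f x) (f y) ↔ r x y) {x y : α} (hx : x ∈ t) (hy : y ∈ t) :
    r (s.piecewise f id x) (s.piecewise f id y) ↔ r x y := by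
  by_cases hxs : x ∈ s <;> by_cases hys : y ∈ s <;>
    simp only [Set.piecewise_eq_of_mem, Set.piecewise_eq_of_notMem, hxs, hys, not_false_eq_true,
      id_eq]
  · exact hfr x hxs y hys
  · exact iff_of_false (fun h => hys ((hr _ (hst (hf hxs)) y hy h).1 (hf hxs)))
      fun h => hys ((hr x hx y hy h).1 hxs)
  · exact iff_of_false (fun h => hxs ((hr x hx _ (hst (hf hys)) h).2 (hf hys)))
      fun h => hxs ((hr x hx y hy h).2 hys)

end Piecewise

theorem finiteDimensional_and_finrank_eq_iff_length_eq {K V : Type*} [DivisionRing K]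
    [AddCommGroup V] [Module K V] {n : ℕ} :
    FiniteDimensional K V ∧ finrank K V = n ↔ Module.length K V = n := by
  refine ⟨fun ⟨_, hn⟩ => hn ▸ Module.length_eq_finrank K V, fun h => ?_⟩
  have hrank : Module.rank K V = n := by
    rwa [Module.length_eq_rank, Cardinal.toENat_eq_natCast] at h
  exact ⟨.of_rank_eq_nat hrank, finrank_eq_of_rank_eq hrank⟩

section FiniteCodimension

variable {E E' : Type*} [NormedAddCommGroup E] [InnerProductSpace ℂ E]
  [NormedAddCommGroup E'] [InnerProductSpace ℂ E'] {f : E →ₗ[ℂ] E'} {W X Y Z : Submodule ℂ E}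

theorem codimIn_iff {n : ℕ} : CodimIn W X n ↔ W ≤ X ∧ relLength W X = n :=
  and_congr_right fun _ => finiteDimensional_and_finrank_eq_iff_length_eq

theorem codimIn_map_iff (hf : Function.Injective f) {n : ℕ} :
    CodimIn (W.map f) (X.map f) n ↔ CodimIn W X n := by
  rw [codimIn_iff, codimIn_iff, map_le_map_iff_of_injective hf, relLength_map hf]

theorem adjacent_map_iff (hf : Function.Injective f) :
    Adjacent (X.map f) (Y.map f) ↔ Adjacent X Y := by
  rw [Adjacent, ← Submodule.map_inf _ hf, codimIn_map_iff hf, codimIn_map_iff hf, Adjacent]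

theorem sameFinCodim_iff :
    SameFinCodim X Y ↔ relLength Y X = relLength X Y ∧ relLength X Y ≠ ⊤ := by
  have hX : relLength (X ⊓ Y) X = relLength Y X := relLength_inf_left Y X
  have hY : relLength (X ⊓ Y) Y = relLength X Y := inf_comm X Y ▸ relLength_inf_left X Y
  simp only [SameFinCodim, codimIn_iff, inf_le_left, inf_le_right, true_and, hX, hY,
    ENat.ne_top_iff_exists]
  exact ⟨fun ⟨n, h₁, h₂⟩ => ⟨h₁.trans h₂.symm, n, h₂.symm⟩,
    fun ⟨h, n, hn⟩ => ⟨n, h.trans hn.symm, hn.symm⟩⟩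

namespace SameFinCodim

protected theorem refl (X : Submodule ℂ E) : SameFinCodim X X := by
  simp [sameFinCodim_iff, relLength_self]

protected theorem symm (h : SameFinCodim X Y) : SameFinCodim Y X := by
  obtain ⟨heq, hfin⟩ := sameFinCodim_iff.1 h
  exact sameFinCodim_iff.2 ⟨heq.symm, heq ▸ hfin⟩

protected theorem trans (hXY : SameFinCodim X Y) (hYZ : SameFinCodim Y Z) : SameFinCodim X Z := by
  obtain ⟨heqXY, hfinXY⟩ := sameFinCodim_iff.1 hXY
  obtain ⟨heqYZ, hfinYZ⟩ := sameFinCodim_iff.1 hYZ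
  exact sameFinCodim_iff.2 ⟨relLength_comm_trans heqXY hfinXY heqYZ hfinYZ,
    ne_top_of_le_ne_top (WithTop.add_ne_top.2 ⟨hfinXY, hfinYZ⟩) (relLength_triangle X Y Z)⟩

end SameFinCodim

namespace IsAComponent

variable {C : Set (Submodule ℂ E)}

theorem mem_of_sameFinCodim (hC : IsAComponent C) (hX : X ∈ C) (hY : Y ∈ Ginf)
    (h : SameFinCodim X Y) : Y ∈ C := by
  obtain ⟨hCG, hpair, hmax⟩ := hC
  have hYC : ∀ Z ∈ C, SameFinCodim Y Z := fun Z hZ => h.symm.trans (hpair X hX Z hZ)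
  have hpair_insert : ∀ A ∈ insert Y C, ∀ B ∈ insert Y C, SameFinCodim A B := by
    rintro A (rfl | hA) B (rfl | hB)
    · exact .refl _
    · exact hYC B hB
    · exact (hYC A hA).symm
    · exact hpair A hA B hB
  exact hmax _ (Set.insert_subset hY hCG) hpair_insert (Set.subset_insert Y C) ▸
    Set.mem_insert Y C

theorem mem_iff_of_sameFinCodim (hC : IsAComponent C) (hX : X ∈ Ginf) (hY : Y ∈ Ginf)
    (h : SameFinCodim X Y) : X ∈ C ↔ Y ∈ C :=
  ⟨fun hXC => hC.mem_of_sameFinCodim hXC hY h, fun hYC => hC.mem_of_sameFinCodim hYC hX h.symm⟩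

end IsAComponent

end FiniteCodimension

theorem OrthoAdjacent.sameFinCodim {X Y : Submodule ℂ H} (h : OrthoAdjacent X Y) :
    SameFinCodim X Y :=
  ⟨1, h.1⟩

section Unitary

variable {H' : Type*} [NormedAddCommGroup H'] [InnerProductSpace ℂ H'] [CompleteSpace H']
  (U : H ≃ₗᵢ[ℂ] H') {X Y : Submodule ℂ H}

theorem projCLM_map (X : Submodule ℂ H) :
    projCLM (X.map U.toLinearEquiv.toLinearMap) = U.conjStarAlgEquiv (projCLM X) := by
  have hclosed : IsClosed (X.map U.toLinearEquiv.toLinearMap : Set H') ↔ IsClosed (X : Set H) :=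
    U.toHomeomorph.isClosed_image
  by_cases hX : IsClosed (X : Set H)
  · have : CompleteSpace X := hX.completeSpace_coe
    rw [projCLM, projCLM, dif_pos hX, dif_pos (hclosed.2 hX)]
    ext x
    exact starProjection_map_apply U X x
  · rw [projCLM, projCLM, dif_neg hX, dif_neg (mt hclosed.1 hX), map_zero]

theorem compatible_map_iff :
    Compatible (X.map U.toLinearEquiv.toLinearMap) (Y.map U.toLinearEquiv.toLinearMap) ↔
      Compatible X Y := by
  rw [Compatible, projCLM_map, projCLM_map,
    commute_map_iff (EquivLike.injective U.conjStarAlgEquiv), Compatible]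

theorem orthoAdjacent_map_iff :
    OrthoAdjacent (X.map U.toLinearEquiv.toLinearMap) (Y.map U.toLinearEquiv.toLinearMap) ↔
      OrthoAdjacent X Y :=
  and_congr (adjacent_map_iff U.injective) (compatible_map_iff U)

end Unitary

/-- if `U` is a unitary operator mapping an `A`-component `C` onto itself, then
the map equal to `U` on `C` and the identity off `C` is a bijective transformation of
`G_∞(H)` preserving ortho-adjacency in both directions. -/
theorem stmt14 (hH : ¬FiniteDimensional ℂ H)
    (U : H ≃ₗᵢ[ℂ] H) (C : Set (Submodule ℂ H)) (hC : IsAComponent C)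
    (hUC : ∀ X ∈ C, X.map U.toLinearEquiv.toLinearMap ∈ C)
    (hUonto : (fun X : Submodule ℂ H => X.map U.toLinearEquiv.toLinearMap) '' C = C) :
    Set.BijOn (fun X : Submodule ℂ H =>
        if X ∈ C then X.map U.toLinearEquiv.toLinearMap else X)
      (Ginf (H := H)) (Ginf (H := H)) ∧
    ∀ X ∈ Ginf (H := H), ∀ Y ∈ Ginf (H := H),
      OrthoAdjacent X Y ↔
        OrthoAdjacent (if X ∈ C then X.map U.toLinearEquiv.toLinearMap else X)
          (if Y ∈ C then Y.map U.toLinearEquiv.toLinearMap else Y) := by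
  have hbij : Set.BijOn (map U.toLinearEquiv.toLinearMap) C C := by
    have hinj : Function.Injective (map U.toLinearEquiv.toLinearMap) :=
      map_injective_of_injective U.injective
    simpa only [hUonto] using hinj.injOn (s := C).bijOn_image
  have hCsat : ∀ X ∈ Ginf, ∀ Y ∈ Ginf, OrthoAdjacent X Y → (X ∈ C ↔ Y ∈ C) :=
    fun X hX Y hY h => hC.mem_iff_of_sameFinCodim hX hY h.sameFinCodim
  exact ⟨bijOn_piecewise_id hbij hC.1, fun X hX Y hY =>
    (piecewise_id_rel_iff hbij.mapsTo hC.1 hCsat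
      (fun _ _ _ _ => orthoAdjacent_map_iff U) hX hY).symm⟩
end

section
/- Let k be a positive integer and let f be a bijective transformation of G^k(H), the set of closed subspaces of H of codimension k, which preserves the ortho-adjacency relation in both directions. Then the map g : G_k(H) → G_k(H) defined by g(X) = f(X^⊥)^⊥ is a bijective transformation of the set G_k(H) of k-dimensional subspaces of H which preserves the ortho-adjacency relation in both directions; moreover, if g is induced by a unitary or anti-unitary operator U (i.e., g(X) = U(X) for all X ∈ G_k(H)), then f(Y) = U(Y) for all Y ∈ G^k(H). -/
open Module Submodule Classical

variable {H : Type*} [NormedAddCommGroup H] [InnerProductSpace ℂ H] [CompleteSpace H]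

/-!
Taking orthogonal complements is an involution on closed subspaces that exchanges `G_k(H)` and
`G^k(H)`. It preserves ortho-adjacency: the projection onto `Xᗮ` is `1 - P_X`, so commuting
projections stay commuting, and `Xᗮ ⧸ (Xᗮ ⊓ Yᗮ) ≃ (X ⊔ Y) ⧸ X ≃ Y ⧸ (X ⊓ Y)`. Hence `g` inherits
bijectivity and preservation from `f`. A surjective semilinear isometry commutes with `ᗮ`, because
`x ∈ Kᗮ` says that the distance from `x` to `K` is `‖x‖`; so `g` and `f` are induced by the same
operators.
-/

section LinearEquiv

variable {R M N : Type*} [Semiring R] [AddCommMonoid M] [AddCommMonoid N] [Module R M] [Module R N]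

theorem finite_and_finrank_eq_congr (e : M ≃ₗ[R] N) (n : ℕ) :
    Module.Finite R M ∧ finrank R M = n ↔ Module.Finite R N ∧ finrank R N = n := by
  rw [Module.Finite.equiv_iff e, e.finrank_eq]

end LinearEquiv

section ClosedSubspace

variable {𝕜 E : Type*} [RCLike 𝕜] [NormedAddCommGroup E] [InnerProductSpace 𝕜 E]

theorem isClosed_of_hasOrthogonalProjection (K : Submodule 𝕜 E) [K.HasOrthogonalProjection] :
    IsClosed (K : Set E) :=
  K.orthogonal_orthogonal ▸ isClosed_orthogonal Kᗮ

theorem hasOrthogonalProjection_of_isClosed [CompleteSpace E] {K : Submodule 𝕜 E}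
    (hK : IsClosed (K : Set E)) : K.HasOrthogonalProjection :=
  have := hK.completeSpace_coe
  inferInstance

end ClosedSubspace

section SemilinearIsometry

variable {𝕜 𝕜₂ E E₂ : Type*} [RCLike 𝕜] [RCLike 𝕜₂]
  [NormedAddCommGroup E] [InnerProductSpace 𝕜 E]
  [NormedAddCommGroup E₂] [InnerProductSpace 𝕜₂ E₂]

theorem mem_orthogonal_iff_norm_eq_iInf (K : Submodule 𝕜 E) (x : E) :
    x ∈ Kᗮ ↔ ‖x‖ = ⨅ w : K, ‖x - w‖ := by
  simpa [mem_orthogonal'] using (K.norm_eq_iInf_iff_inner_eq_zero (u := x) K.zero_mem).symm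

variable {σ : 𝕜 →+* 𝕜₂} {τ : 𝕜₂ →+* 𝕜} [RingHomInvPair σ τ] [RingHomInvPair τ σ]

theorem apply_mem_orthogonal_map_iff (U : E ≃ₛₗᵢ[σ] E₂) (K : Submodule 𝕜 E) (x : E) :
    U x ∈ (K.map U.toLinearEquiv.toLinearMap)ᗮ ↔ x ∈ Kᗮ := by
  have dist_eq : ⨅ w : K, ‖x - w‖ = ⨅ w : K.map U.toLinearEquiv.toLinearMap, ‖U x - w‖ :=
    (U.toLinearEquiv.submoduleMap K).toEquiv.iInf_congr fun w ↦ by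
      simpa using U.norm_map (x - w)
  rw [mem_orthogonal_iff_norm_eq_iInf, mem_orthogonal_iff_norm_eq_iInf, U.norm_map, dist_eq]

theorem orthogonal_map_linearIsometryEquiv (U : E ≃ₛₗᵢ[σ] E₂) (K : Submodule 𝕜 E) :
    (K.map U.toLinearEquiv.toLinearMap)ᗮ = Kᗮ.map U.toLinearEquiv.toLinearMap := by
  ext y
  obtain ⟨x, rfl⟩ := U.surjective y
  rw [apply_mem_orthogonal_map_iff]
  exact (U.injective.mem_set_image (s := (Kᗮ : Set E))).symm

theorem eq_map_of_orthogonal_eq_map_orthogonal (U : E ≃ₛₗᵢ[σ] E₂) {K : Submodule 𝕜 E}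
    {L : Submodule 𝕜₂ E₂} [K.HasOrthogonalProjection] [L.HasOrthogonalProjection]
    (h : Lᗮ = Kᗮ.map U.toLinearEquiv.toLinearMap) : L = K.map U.toLinearEquiv.toLinearMap :=
  calc
    L = Lᗮᗮ := L.orthogonal_orthogonal.symm
    _ = Kᗮᗮ.map U.toLinearEquiv.toLinearMap := by rw [h, orthogonal_map_linearIsometryEquiv]
    _ = K.map U.toLinearEquiv.toLinearMap := by rw [K.orthogonal_orthogonal]

end SemilinearIsometry

section Codimension

variable {E : Type*} [NormedAddCommGroup E] [InnerProductSpace ℂ E]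

theorem codimIn_iff_finrank_inf_orthogonal {W X : Submodule ℂ E} [W.HasOrthogonalProjection]
    (hWX : W ≤ X) (n : ℕ) :
    CodimIn W X n ↔ FiniteDimensional ℂ ↥(X ⊓ Wᗮ) ∧ finrank ℂ ↥(X ⊓ Wᗮ) = n := by
  have compl : IsCompl (W.comap X.subtype) (Wᗮ.comap X.subtype) :=
    isCompl_comap_subtype_of_isCompl_of_le W.isCompl_orthogonal hWX
  let e : (X ⧸ W.comap X.subtype) ≃ₗ[ℂ] ↥(X ⊓ Wᗮ) :=
    quotientEquivOfIsCompl _ _ compl ≪≫ₗ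
      equivMapOfInjective X.subtype X.injective_subtype _ ≪≫ₗ
      LinearEquiv.ofEq _ _ (map_comap_subtype X Wᗮ)
  exact (and_iff_right hWX).trans (finite_and_finrank_eq_congr e n)

theorem codimIn_inf_left_iff (X Y : Submodule ℂ E) (n : ℕ) :
    CodimIn (X ⊓ Y) X n ↔ CodimIn Y (X ⊔ Y) n :=
  and_congr (iff_of_true inf_le_left le_sup_right)
    (finite_and_finrank_eq_congr (LinearMap.quotientInfEquivSupQuotient X Y) n)

theorem adjacent_iff_codimIn_sup (X Y : Submodule ℂ E) :
    Adjacent X Y ↔ CodimIn Y (X ⊔ Y) 1 ∧ CodimIn X (X ⊔ Y) 1 := by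
  rw [Adjacent, codimIn_inf_left_iff, inf_comm, codimIn_inf_left_iff, sup_comm Y X]

theorem orthogonal_mem_Gk_iff {X : Submodule ℂ E} [X.HasOrthogonalProjection] {k : ℕ} :
    Xᗮ ∈ Gk k ↔ X ∈ GCk k :=
  ((and_iff_right (isClosed_of_hasOrthogonalProjection X)).trans
    (finite_and_finrank_eq_congr X.quotientEquivOrthogonal.toLinearEquiv k)).symm

theorem orthogonal_mem_GCk_iff {X : Submodule ℂ E} [X.HasOrthogonalProjection] {k : ℕ} :
    Xᗮ ∈ GCk k ↔ X ∈ Gk k := by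
  rw [← orthogonal_mem_Gk_iff, X.orthogonal_orthogonal]

end Codimension

theorem CodimIn.hasOrthogonalProjection {W X : Submodule ℂ H} [W.HasOrthogonalProjection] {n : ℕ}
    (h : CodimIn W X n) : X.HasOrthogonalProjection := by
  have : FiniteDimensional ℂ ↥(Wᗮ ⊓ X) :=
    inf_comm X Wᗮ ▸ ((codimIn_iff_finrank_inf_orthogonal h.1 n).1 h).1
  rw [← sup_orthogonal_inf_of_hasOrthogonalProjection h.1]
  exact hasOrthogonalProjection_of_isClosed <|
    isClosed_sup_finiteDimensional W _ (isClosed_of_hasOrthogonalProjection W)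

-- Both codimensions are the dimension of `X ⊓ Wᗮ`.
theorem CodimIn.orthogonal {W X : Submodule ℂ H} [W.HasOrthogonalProjection] {n : ℕ}
    (h : CodimIn W X n) : CodimIn Xᗮ Wᗮ n := by
  have := h.hasOrthogonalProjection
  rw [codimIn_iff_finrank_inf_orthogonal (orthogonal_le h.1), X.orthogonal_orthogonal, inf_comm]
  exact (codimIn_iff_finrank_inf_orthogonal h.1 n).1 h

section OrthoAdjacency

variable {X Y : Submodule ℂ H} [X.HasOrthogonalProjection] [Y.HasOrthogonalProjection]

theorem Adjacent.orthogonal (h : Adjacent X Y) : Adjacent Xᗮ Yᗮ := by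
  obtain ⟨hY, hX⟩ := (adjacent_iff_codimIn_sup X Y).1 h
  rw [Adjacent, inf_orthogonal]
  exact ⟨hX.orthogonal, hY.orthogonal⟩

variable (X) in
theorem projCLM_eq_starProjection : projCLM X = X.starProjection :=
  dif_pos (isClosed_of_hasOrthogonalProjection X)

theorem Compatible.orthogonal (h : Compatible X Y) : Compatible Xᗮ Yᗮ := by
  simp only [Compatible, projCLM_eq_starProjection, starProjection_orthogonal'] at h ⊢
  exact (Commute.one_left _).sub_left ((Commute.one_right _).sub_right h)

theorem OrthoAdjacent.orthogonal (h : OrthoAdjacent X Y) : OrthoAdjacent Xᗮ Yᗮ :=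
  ⟨h.1.orthogonal, h.2.orthogonal⟩

theorem orthoAdjacent_orthogonal_iff : OrthoAdjacent Xᗮ Yᗮ ↔ OrthoAdjacent X Y :=
  ⟨fun h ↦ by simpa only [orthogonal_orthogonal] using h.orthogonal, OrthoAdjacent.orthogonal⟩

end OrthoAdjacency

theorem invOn_orthogonal_Gk_GCk (k : ℕ) :
    Set.InvOn orthogonal orthogonal (Gk (H := H) k) (GCk k) :=
  ⟨fun X hX ↦ have := hX.1; X.orthogonal_orthogonal,
    fun Y hY ↦ have := hasOrthogonalProjection_of_isClosed hY.1; Y.orthogonal_orthogonal⟩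

theorem bijOn_orthogonal_Gk_GCk (k : ℕ) : Set.BijOn orthogonal (Gk (H := H) k) (GCk k) :=
  (invOn_orthogonal_Gk_GCk k).bijOn
    (fun _ hX ↦ have := hX.1; orthogonal_mem_GCk_iff.2 hX)
    (fun _ hY ↦ have := hasOrthogonalProjection_of_isClosed hY.1; orthogonal_mem_Gk_iff.2 hY)

theorem bijOn_orthogonal_GCk_Gk (k : ℕ) : Set.BijOn orthogonal (GCk (H := H) k) (Gk k) :=
  (bijOn_orthogonal_Gk_GCk k).symm (invOn_orthogonal_Gk_GCk k).symm

theorem eqOn_GCk_map_of_eqOn_Gk_map {σ τ : ℂ →+* ℂ} [RingHomInvPair σ τ] [RingHomInvPair τ σ]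
    (U : H ≃ₛₗᵢ[σ] H) {k : ℕ} {f : Submodule ℂ H → Submodule ℂ H}
    (hf : Set.MapsTo f (GCk k) (GCk k))
    (h : Set.EqOn (fun X ↦ (f Xᗮ)ᗮ) (Submodule.map U.toLinearEquiv.toLinearMap) (Gk k)) :
    Set.EqOn f (Submodule.map U.toLinearEquiv.toLinearMap) (GCk k) := by
  intro Y hY
  have := hasOrthogonalProjection_of_isClosed hY.1
  have := hasOrthogonalProjection_of_isClosed (hf hY).1
  apply eq_map_of_orthogonal_eq_map_orthogonal
  simpa only [orthogonal_orthogonal] using h (orthogonal_mem_Gk_iff.2 hY)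

theorem stmt15_general (k : ℕ)
    (f : Submodule ℂ H → Submodule ℂ H)
    (hbij : Set.BijOn f (GCk (H := H) k) (GCk (H := H) k))
    (hf : ∀ X ∈ GCk (H := H) k, ∀ Y ∈ GCk (H := H) k,
      OrthoAdjacent X Y ↔ OrthoAdjacent (f X) (f Y)) :
    Set.BijOn (fun X : Submodule ℂ H => (f Xᗮ)ᗮ) (Gk (H := H) k) (Gk (H := H) k) ∧
    (∀ X ∈ Gk (H := H) k, ∀ Y ∈ Gk (H := H) k,
      OrthoAdjacent X Y ↔ OrthoAdjacent ((f Xᗮ)ᗮ) ((f Yᗮ)ᗮ)) ∧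
    (∀ U : H ≃ₗᵢ[ℂ] H,
      (∀ X ∈ Gk (H := H) k, (f Xᗮ)ᗮ = X.map U.toLinearEquiv.toLinearMap) →
      ∀ Y ∈ GCk (H := H) k, f Y = Y.map U.toLinearEquiv.toLinearMap) ∧
    (∀ U : H ≃ₗᵢ⋆[ℂ] H,
      (∀ X ∈ Gk (H := H) k, (f Xᗮ)ᗮ = X.map U.toLinearEquiv.toLinearMap) →
      ∀ Y ∈ GCk (H := H) k, f Y = Y.map U.toLinearEquiv.toLinearMap) := by
  refine ⟨(bijOn_orthogonal_GCk_Gk k).comp (hbij.comp (bijOn_orthogonal_Gk_GCk k)), ?_,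
    fun U h ↦ eqOn_GCk_map_of_eqOn_Gk_map U hbij.mapsTo h,
    fun U h ↦ eqOn_GCk_map_of_eqOn_Gk_map U hbij.mapsTo h⟩
  intro X hX Y hY
  have hXperp : Xᗮ ∈ GCk k := (bijOn_orthogonal_Gk_GCk k).mapsTo hX
  have hYperp : Yᗮ ∈ GCk k := (bijOn_orthogonal_Gk_GCk k).mapsTo hY
  have := hX.1
  have := hY.1
  have := hasOrthogonalProjection_of_isClosed (hbij.mapsTo hXperp).1
  have := hasOrthogonalProjection_of_isClosed (hbij.mapsTo hYperp).1
  calc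
    OrthoAdjacent X Y ↔ OrthoAdjacent Xᗮ Yᗮ := orthoAdjacent_orthogonal_iff.symm
    _ ↔ OrthoAdjacent (f Xᗮ) (f Yᗮ) := hf _ hXperp _ hYperp
    _ ↔ OrthoAdjacent (f Xᗮ)ᗮ (f Yᗮ)ᗮ := orthoAdjacent_orthogonal_iff.symm

/-- for a bijective transformation `f` of `G^k(H)` preserving ortho-adjacency in
both directions, the map `g(X) = f(X^⊥)^⊥` is a bijective transformation of `G_k(H)`
preserving ortho-adjacency in both directions; and if `g` is induced by a unitary or
anti-unitary operator `U`, then so is `f`. -/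
theorem stmt15 (hH : ¬FiniteDimensional ℂ H) (k : ℕ) (hk : 0 < k)
    (f : Submodule ℂ H → Submodule ℂ H)
    (hbij : Set.BijOn f (GCk (H := H) k) (GCk (H := H) k))
    (hf : ∀ X ∈ GCk (H := H) k, ∀ Y ∈ GCk (H := H) k,
      OrthoAdjacent X Y ↔ OrthoAdjacent (f X) (f Y)) :
    Set.BijOn (fun X : Submodule ℂ H => (f Xᗮ)ᗮ) (Gk (H := H) k) (Gk (H := H) k) ∧
    (∀ X ∈ Gk (H := H) k, ∀ Y ∈ Gk (H := H) k,
      OrthoAdjacent X Y ↔ OrthoAdjacent ((f Xᗮ)ᗮ) ((f Yᗮ)ᗮ)) ∧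
    (∀ U : H ≃ₗᵢ[ℂ] H,
      (∀ X ∈ Gk (H := H) k, (f Xᗮ)ᗮ = X.map U.toLinearEquiv.toLinearMap) →
      ∀ Y ∈ GCk (H := H) k, f Y = Y.map U.toLinearEquiv.toLinearMap) ∧
    (∀ U : H ≃ₗᵢ⋆[ℂ] H,
      (∀ X ∈ Gk (H := H) k, (f Xᗮ)ᗮ = X.map U.toLinearEquiv.toLinearMap) →
      ∀ Y ∈ GCk (H := H) k, f Y = Y.map U.toLinearEquiv.toLinearMap) :=
  stmt15_general k f hbij hf
end

section
/- For any adjacent X, Y ∈ G_∞(H) there exists Z ∈ G_∞(H) which is ortho-adjacent to both X and Y. -/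
open Module Submodule Classical

variable {H : Type*} [NormedAddCommGroup H] [InnerProductSpace ℂ H] [CompleteSpace H]

/-!
Put `W = X ⊓ Y`. Since `Y` has finite codimension in `X ⊔ Y`, the space `(X ⊔ Y)ᗮ` is
infinite-dimensional; pick a nonzero `z` in it and let `Z = W ⊔ span {z}`. Then
`Z ⊓ X = W = Z ⊓ Y`, and the projection onto `Z` is the sum of the projections onto `W`, which is
contained in `X` and in `Y`, and onto `span {z}`, which is orthogonal to both. Both summands
therefore commute with the projections onto `X` and `Y`. Finally, adjacency preserves infinite
dimension and infinite codimension, so `Z` inherits them from `X`.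
-/

section RCLike

variable {𝕜 E : Type*} [RCLike 𝕜] [NormedAddCommGroup E] [InnerProductSpace 𝕜 E]
  {U V : Submodule 𝕜 E}

lemma commute_starProjection_of_le [U.HasOrthogonalProjection] [V.HasOrthogonalProjection]
    (h : U ≤ V) : Commute U.starProjection V.starProjection :=
  (starProjection_comp_starProjection_of_le h).trans <| by
    ext x
    exact (starProjection_eq_self_iff.mpr (h (U.starProjection_apply_mem x))).symm

lemma commute_starProjection_of_isOrtho [U.HasOrthogonalProjection] [V.HasOrthogonalProjection]
    (h : U ⟂ V) : Commute U.starProjection V.starProjection :=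
  h.starProjection_comp_starProjection.trans h.symm.starProjection_comp_starProjection.symm

lemma starProjection_sup_of_isOrtho [U.HasOrthogonalProjection] [V.HasOrthogonalProjection]
    [(U ⊔ V).HasOrthogonalProjection] (h : U ⟂ V) :
    (U ⊔ V).starProjection = U.starProjection + V.starProjection := by
  ext x
  have hU : x - (U.starProjection x + V.starProjection x) ∈ Uᗮ := by
    rw [← sub_sub]
    exact Uᗮ.sub_mem (U.sub_starProjection_mem_orthogonal x)
      (h.symm (V.starProjection_apply_mem x))
  have hV : x - (U.starProjection x + V.starProjection x) ∈ Vᗮ := by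
    rw [add_comm, ← sub_sub]
    exact Vᗮ.sub_mem (V.sub_starProjection_mem_orthogonal x) (h (U.starProjection_apply_mem x))
  refine eq_starProjection_of_mem_orthogonal
    (add_mem_sup (U.starProjection_apply_mem x) (V.starProjection_apply_mem x)) ?_
  rw [← inf_orthogonal]
  exact ⟨hU, hV⟩

lemma finiteDimensional_orthogonal_of_sup [FiniteDimensional 𝕜 V]
    (h : FiniteDimensional 𝕜 ↥(U ⊔ V)ᗮ) : FiniteDimensional 𝕜 Uᗮ := by
  rw [← fg_iff_finiteDimensional] at h ⊢
  refine fg_of_fg_map_of_fg_inf_ker V.orthogonalProjectionOnto.toLinearMap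
    (IsNoetherian.noetherian _) ?_
  rwa [ker_orthogonalProjectionOnto, inf_orthogonal]

lemma sup_inf_eq_left_of_le_of_isOrtho {W : Submodule 𝕜 E} (hWV : W ≤ V) (hUV : U ⟂ V) :
    (W ⊔ U) ⊓ V = W := by
  rw [sup_inf_assoc_of_le U hWV, hUV.disjoint.eq_bot, sup_bot_eq]

end RCLike

section Codimension

variable {E : Type*} [NormedAddCommGroup E] [InnerProductSpace ℂ E] {W X Y Z : Submodule ℂ E}
  {n : ℕ}

lemma CodimIn.exists_finiteDimensional_sup_eq (h : CodimIn W X n) :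
    ∃ F : Submodule ℂ E, FiniteDimensional ℂ F ∧ W ⊔ F = X := by
  obtain ⟨hWX, hfin, -⟩ := h
  obtain ⟨F, hF⟩ := (W.comap X.subtype).exists_isCompl
  have : FiniteDimensional ℂ F := (quotientEquivOfIsCompl _ F hF).finiteDimensional
  refine ⟨F.map X.subtype, inferInstance, ?_⟩
  calc W ⊔ F.map X.subtype
      = (W.comap X.subtype).map X.subtype ⊔ F.map X.subtype := by
        rw [map_comap_subtype, inf_eq_right.mpr hWX]
    _ = X := by rw [← Submodule.map_sup, hF.sup_eq_top, map_subtype_top]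

lemma CodimIn.finiteDimensional_iff (h : CodimIn W X n) :
    FiniteDimensional ℂ W ↔ FiniteDimensional ℂ X := by
  refine ⟨fun _ ↦ ?_, fun _ ↦ finiteDimensional_of_le h.1⟩
  obtain ⟨F, _, rfl⟩ := h.exists_finiteDimensional_sup_eq
  infer_instance

lemma CodimIn.finiteDimensional_orthogonal_iff (h : CodimIn W X n) :
    FiniteDimensional ℂ Wᗮ ↔ FiniteDimensional ℂ Xᗮ := by
  refine ⟨fun _ ↦ finiteDimensional_of_le (orthogonal_le h.1), fun hX ↦ ?_⟩
  obtain ⟨F, _, rfl⟩ := h.exists_finiteDimensional_sup_eq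
  exact finiteDimensional_orthogonal_of_sup hX

lemma codimIn_inf_iff_codimIn_sup : CodimIn (X ⊓ Y) X n ↔ CodimIn Y (X ⊔ Y) n := by
  let e : (X ⧸ (X ⊓ Y).comap X.subtype) ≃ₗ[ℂ] ↥(X ⊔ Y) ⧸ Y.comap (X ⊔ Y).subtype :=
    LinearMap.quotientInfEquivSupQuotient X Y
  exact and_congr (iff_of_true inf_le_left le_sup_right)
    (and_congr (Module.Finite.equiv_iff e) (by rw [e.finrank_eq]))

lemma codimIn_sup_of_disjoint (F : Submodule ℂ E) [FiniteDimensional ℂ F] (h : Disjoint W F) :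
    CodimIn W (W ⊔ F) (finrank ℂ F) := by
  rw [sup_comm, ← codimIn_inf_iff_codimIn_sup]
  refine ⟨inf_le_left, inferInstance, ?_⟩
  rw [h.symm.eq_bot, comap_bot, ker_subtype]
  exact (quotEquivOfEqBot ⊥ rfl).finrank_eq

lemma Adjacent.symm (h : Adjacent X Y) : Adjacent Y X := by
  rw [Adjacent, inf_comm]
  exact And.symm h

lemma Adjacent.mem_Ginf (h : Adjacent X Z) (hX : X ∈ Ginf) (hZ : IsClosed (Z : Set E)) :
    Z ∈ Ginf := by
  obtain ⟨-, hdim, hcodim⟩ := hX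
  refine ⟨hZ, ?_, ?_⟩
  · rwa [← h.2.finiteDimensional_iff, h.1.finiteDimensional_iff]
  · rwa [← h.2.finiteDimensional_orthogonal_iff, h.1.finiteDimensional_orthogonal_iff]

lemma Adjacent.orthogonal_sup_ne_bot (h : Adjacent X Y) (hY : ¬FiniteDimensional ℂ Yᗮ) :
    (X ⊔ Y)ᗮ ≠ ⊥ := by
  intro hbot
  rw [(codimIn_inf_iff_codimIn_sup.mp h.1).finiteDimensional_orthogonal_iff, hbot] at hY
  exact hY inferInstance

end Codimension

section OrthoAdjacent

variable {K W X Y F : Submodule ℂ H}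

lemma projCLM_eq_starProjection_s16 [K.HasOrthogonalProjection] (hK : IsClosed (K : Set H)) :
    projCLM K = K.starProjection :=
  dif_pos hK

lemma compatible_sup_of_le_of_isOrtho [FiniteDimensional ℂ F] (hW : IsClosed (W : Set H))
    (hX : IsClosed (X : Set H)) (hWX : W ≤ X) (hFX : F ⟂ X) : Compatible (W ⊔ F) X := by
  have hWF : IsClosed ((W ⊔ F : Submodule ℂ H) : Set H) := isClosed_sup_finiteDimensional W F hW
  have := hW.completeSpace_coe
  have := hX.completeSpace_coe
  have := hWF.completeSpace_coe
  rw [Compatible, projCLM_eq_starProjection_s16 hWF, projCLM_eq_starProjection_s16 hX,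
    starProjection_sup_of_isOrtho (hFX.mono_right hWX).symm]
  exact (commute_starProjection_of_le hWX).add_left (commute_starProjection_of_isOrtho hFX)

lemma orthoAdjacent_sup_of_isOrtho (hF : finrank ℂ F = 1) (hW : IsClosed (W : Set H))
    (hX : IsClosed (X : Set H)) (hWX : CodimIn W X 1) (hFX : F ⟂ X) :
    OrthoAdjacent (W ⊔ F) X := by
  have : FiniteDimensional ℂ F := finite_of_finrank_eq_succ hF
  refine ⟨?_, compatible_sup_of_le_of_isOrtho hW hX hWX.1 hFX⟩
  rw [Adjacent, sup_inf_eq_left_of_le_of_isOrtho hWX.1 hFX]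
  exact ⟨hF ▸ codimIn_sup_of_disjoint F (hFX.mono_right hWX.1).symm.disjoint, hWX⟩

lemma Adjacent.exists_orthoAdjacent (h : Adjacent X Y) (hX : IsClosed (X : Set H))
    (hY : IsClosed (Y : Set H)) (hXY : (X ⊔ Y)ᗮ ≠ ⊥) :
    ∃ Z : Submodule ℂ H, IsClosed (Z : Set H) ∧ OrthoAdjacent Z X ∧ OrthoAdjacent Z Y := by
  obtain ⟨z, hz, hz0⟩ := exists_mem_ne_zero_of_ne_bot hXY
  have hspan : finrank ℂ (span ℂ {z}) = 1 := finrank_span_singleton hz0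
  have hortho : span ℂ {z} ⟂ X ⊔ Y := (span_singleton_le_iff_mem z _).mpr hz
  have hW : IsClosed ((X ⊓ Y : Submodule ℂ H) : Set H) := hX.inter hY
  exact ⟨X ⊓ Y ⊔ span ℂ {z}, isClosed_sup_finiteDimensional _ _ hW,
    orthoAdjacent_sup_of_isOrtho hspan hW hX h.1 (hortho.mono_right le_sup_left),
    orthoAdjacent_sup_of_isOrtho hspan hW hY h.2 (hortho.mono_right le_sup_right)⟩

end OrthoAdjacent

/-- for any adjacent `X, Y ∈ G_∞(H)` there exists `Z ∈ G_∞(H)` ortho-adjacent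
to both `X` and `Y`. -/
theorem stmt16 (hH : ¬FiniteDimensional ℂ H) (X Y : Submodule ℂ H)
    (hX : X ∈ Ginf (H := H)) (hY : Y ∈ Ginf (H := H)) (hadj : Adjacent X Y) :
    ∃ Z ∈ Ginf (H := H), OrthoAdjacent Z X ∧ OrthoAdjacent Z Y := by
  obtain ⟨Z, hZ, hZX, hZY⟩ := hadj.exists_orthoAdjacent hX.1 hY.1
    (hadj.orthogonal_sup_ne_bot hY.2.2)
  exact ⟨Z, hZX.1.symm.mem_Ginf hX hZ, hZX, hZY⟩
end
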